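/- Let X ~ N(μ_X, σ_X²) and N ~ N(0, σ_N²) be independent, and define X̃ = (σ_X²/(σ_X² + σ_N²))^{1/2} (X − μ_X + N) + μ_X. Then the mutual information satisfies I(X; X̃) = (1/2) log((σ_X² + σ_N²)/σ_N²), and with D := E[(X − X̃)²] = 2σ_X²(1 − (σ_X²/(σ_X² + σ_N²))^{1/2}) this mutual information equals log( σ_X² / (σ_X² D − D²/4)^{1/2} ), i.e. the pair (X, X̃) achieves the distribution preserving rate-distortion function for N(μ_X, σ_X²) and squared error at distortion D. -/

import Mathlib

open MeasureTheory ProbabilityTheory Real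
open scoped ENNReal NNReal Classical

/-- Kullback–Leibler divergence of `μ` from `ν` (in nats), `∞` if `μ` is not absolutely
continuous w.r.t. `ν` or if the log-likelihood ratio is not integrable. -/
noncomputable def klDiv {α : Type*} [MeasurableSpace α] (μ ν : Measure α) : ℝ≥0∞ :=
  if μ ≪ ν ∧ Integrable (llr μ ν) μ then ENNReal.ofReal (∫ x, llr μ ν x ∂μ) else ⊤

/-- Mutual information of a joint distribution: the KL divergence of the joint law from the
product of its two marginal laws. -/
noncomputable def mutualInfo {α β : Type*} [MeasurableSpace α] [MeasurableSpace β]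
    (ρ : Measure (α × β)) : ℝ≥0∞ :=
  klDiv ρ ((ρ.map Prod.fst).prod (ρ.map Prod.snd))


lemma aux_moment {Ω : Type*} [MeasurableSpace Ω] {P : Measure Ω} {Z : Ω → ℝ} (hZ : Measurable Z)
    {v : ℝ≥0} (h : P.map Z = gaussianReal 0 v) :
    Integrable (fun ω => Z ω ^ 2) P ∧ ∫ ω, Z ω ^ 2 ∂P = v := by
  have hi : Integrable (fun x : ℝ => x ^ 2) (gaussianReal 0 v) :=
    (memLp_id_gaussianReal' (μ := 0) (v := v) 2 (by simp)).integrable_sq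
  have he : ∫ x : ℝ, x ^ 2 ∂(gaussianReal 0 v) = v := by
    have h1 := variance_fun_id_gaussianReal (μ := 0) (v := v)
    rwa [variance_of_integral_eq_zero (by fun_prop) (by simp)] at h1
  constructor
  · rw [← h] at hi
    exact hi.comp_measurable hZ
  · rw [← he, ← h, integral_map hZ.aemeasurable (by fun_prop)]

lemma aux_law {Ω : Type*} [MeasurableSpace Ω] {P : Measure Ω} {X N : Ω → ℝ}
    (hXm : Measurable X) (hNm : Measurable N) {μX : ℝ} {vX vN : ℝ≥0}
    (hX : P.map X = gaussianReal μX vX) (hN : P.map N = gaussianReal 0 vN)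
    (hindep : IndepFun X N P) (a b : ℝ) :
    P.map (fun ω => a * (X ω - μX) + b * N ω) =
      gaussianReal 0 (.mk (a ^ 2) (sq_nonneg _) * vX + .mk (b ^ 2) (sq_nonneg _) * vN) := by
  have h1 : HasLaw X (gaussianReal μX vX) P := ⟨hXm.aemeasurable, hX⟩
  have h2 : HasLaw N (gaussianReal 0 vN) P := ⟨hNm.aemeasurable, hN⟩
  have h3 := (gaussianReal_const_mul (gaussianReal_sub_const h1 μX) a).map_eq
  have h4 := (gaussianReal_const_mul h2 b).map_eq
  have h5 : IndepFun (fun ω => a * (X ω - μX)) (fun ω => b * N ω) P :=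
    hindep.comp (φ := fun x => a * (x - μX)) (ψ := fun x => b * x) (by fun_prop) (by fun_prop)
  have := gaussianReal_add_gaussianReal_of_indepFun h5 h3 h4
  simp only [sub_self, mul_zero, add_zero] at this
  exact this

lemma aux_pdf (m μ : ℝ) {w v : ℝ≥0} (hw : 0 < (w : ℝ)) (hv : 0 < (v : ℝ)) (y : ℝ) :
    gaussianPDFReal m w y = gaussianPDFReal μ v y *
      Real.exp (1 / 2 * Real.log (v / w) - (y - m) ^ 2 / (2 * w) + (y - μ) ^ 2 / (2 * v)) := by
  have hs : Real.exp (1 / 2 * Real.log (v / w)) = √(v / w) := by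
    rw [Real.sqrt_eq_rpow, Real.rpow_def_of_pos (by positivity), mul_comm]
  have hsw : 0 < √(w : ℝ) := Real.sqrt_pos.2 hw
  have hsv : 0 < √(v : ℝ) := Real.sqrt_pos.2 hv
  have hsp : 0 < √(2 * π) := Real.sqrt_pos.2 (by positivity)
  have he : Real.exp (1 / 2 * Real.log (v / w) - (y - m) ^ 2 / (2 * w) + (y - μ) ^ 2 / (2 * v))
      = √(v / w) * Real.exp (-(y - m) ^ 2 / (2 * w)) * Real.exp ((y - μ) ^ 2 / (2 * v)) := by
    rw [← hs, ← Real.exp_add, ← Real.exp_add]; congr 1; ring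
  have hi : Real.exp (-(y - μ) ^ 2 / (2 * v)) * Real.exp ((y - μ) ^ 2 / (2 * v)) = 1 := by
    rw [← Real.exp_add, ← Real.exp_zero]; congr 1; ring
  rw [he, gaussianPDFReal, gaussianPDFReal, Real.sqrt_div hv.le,
    Real.sqrt_mul (by positivity) (w : ℝ), Real.sqrt_mul (by positivity) (v : ℝ)]
  calc _ = (√(2 * π) * √(w : ℝ))⁻¹ * Real.exp (-(y - m) ^ 2 / (2 * w)) * 1 := by ring
    _ = _ := by
      rw [← hi]; field_simp

lemma aux_density (m μ : ℝ) {w v : ℝ≥0} (hw : 0 < (w : ℝ)) (hv : 0 < (v : ℝ)) {s : Set ℝ}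
    (hs : MeasurableSet s) :
    gaussianReal m w s = ∫⁻ y in s, ENNReal.ofReal (Real.exp
      (1 / 2 * Real.log (v / w) - (y - m) ^ 2 / (2 * w) + (y - μ) ^ 2 / (2 * v)))
      ∂(gaussianReal μ v) := by
  have hw' : w ≠ 0 := by rintro rfl; simp at hw
  have hv' : v ≠ 0 := by rintro rfl; simp at hv
  rw [gaussianReal_apply _ hw', gaussianReal_of_var_ne_zero _ hv',
    setLIntegral_withDensity_eq_setLIntegral_mul _ (measurable_gaussianPDF _ _)
      (by fun_prop) hs]
  refine lintegral_congr fun y => ?_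
  rw [Pi.mul_apply, gaussianPDF, gaussianPDF, ← ENNReal.ofReal_mul (gaussianPDFReal_nonneg _ _ _),
    ← aux_pdf m μ hw hv y]

/-- exponent of the density of the joint law w.r.t. the product of marginals. -/
noncomputable def auxG (μ a : ℝ) (w v : ℝ≥0) (p : ℝ × ℝ) : ℝ :=
  1 / 2 * Real.log (v / w) - (p.2 - (a * (p.1 - μ) + μ)) ^ 2 / (2 * w)
    + (p.2 - μ) ^ 2 / (2 * v)

lemma aux_meas (μ a : ℝ) (w v : ℝ≥0) : Measurable (auxG μ a w v) := by
  unfold auxG; fun_prop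

lemma aux_joint {Ω : Type*} [MeasurableSpace Ω] {P : Measure Ω} [IsProbabilityMeasure P]
    {X N : Ω → ℝ}
    (hXm : Measurable X) (hNm : Measurable N) {μX : ℝ} {vX vN : ℝ≥0}
    (hX : P.map X = gaussianReal μX vX) (hN : P.map N = gaussianReal 0 vN)
    (hindep : IndepFun X N P) (a : ℝ) (w : ℝ≥0) (hw : 0 < (w : ℝ)) (hv : 0 < (vX : ℝ))
    (hwa : (w : ℝ) = a ^ 2 * vN) :
    P.map (fun ω => (X ω, a * (X ω - μX + N ω) + μX)) =
      ((gaussianReal μX vX).prod (gaussianReal μX vX)).withDensity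
        (fun p => ENNReal.ofReal (Real.exp (auxG μX a w vX p))) := by
  have hw' : w = .mk (a ^ 2) (sq_nonneg _) * vN := by
    apply NNReal.coe_injective; simpa using hwa
  have hG := aux_meas μX a w vX
  have hT : Measurable (fun p : ℝ × ℝ => (p.1, a * (p.1 - μX + p.2) + μX)) := by fun_prop
  have h1 : P.map (fun ω => (X ω, a * (X ω - μX + N ω) + μX)) =
      ((gaussianReal μX vX).prod (gaussianReal 0 vN)).map
        (fun p : ℝ × ℝ => (p.1, a * (p.1 - μX + p.2) + μX)) := by
    rw [← hX, ← hN, ← (indepFun_iff_map_prod_eq_prod_map_map hXm.aemeasurable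
      hNm.aemeasurable).1 hindep, Measure.map_map hT (by fun_prop)]
    rfl
  rw [h1]
  ext s hs
  rw [Measure.map_apply hT hs, Measure.prod_apply (hT hs), withDensity_apply _ hs,
    ← lintegral_indicator hs, lintegral_prod _ (by
      apply Measurable.aemeasurable; apply Measurable.indicator _ hs; fun_prop)]
  refine lintegral_congr fun x => ?_
  have hsx : MeasurableSet (Prod.mk x ⁻¹' s) := measurable_prodMk_left hs
  have h2 : gaussianReal (a * (x - μX) + μX) w =
      (gaussianReal 0 vN).map (fun n => a * (x - μX + n) + μX) := by
    have h3 : HasLaw (fun n : ℝ => n) (gaussianReal 0 vN) (gaussianReal 0 vN) :=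
      ⟨by fun_prop, Measure.map_id'⟩
    have h4 := (gaussianReal_add_const (gaussianReal_const_mul h3 a) (a * (x - μX) + μX)).map_eq
    rw [hw']
    simp only [mul_zero, zero_add] at h4
    rw [← h4]; congr 1; ext n; ring
  have h5 := aux_density (a * (x - μX) + μX) μX hw hv hsx
  rw [h2, Measure.map_apply (by fun_prop) hsx] at h5
  refine Eq.trans ?_ (h5.trans ?_)
  · rfl
  · rw [← lintegral_indicator hsx]
    rfl

/-- for independent `X ~ N(μ_X, σ_X²)` and `N ~ N(0, σ_N²)`, with
`X̃ = (σ_X²/(σ_X² + σ_N²))^{1/2} (X − μ_X + N) + μ_X`, the mutual information is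
`I(X; X̃) = (1/2) log((σ_X² + σ_N²)/σ_N²)`, and with `D := E[(X − X̃)²]` this mutual
information equals `log(σ_X² / (σ_X² D − D²/4)^{1/2})`, i.e. the pair `(X, X̃)` achieves the
distribution preserving rate-distortion function at distortion `D`. -/
theorem gaussian_forward_channel_achieves_RDP {Ω : Type*} [MeasurableSpace Ω] (P : Measure Ω)
    [IsProbabilityMeasure P] (X N : Ω → ℝ) (hXm : Measurable X) (hNm : Measurable N)
    (μX : ℝ) (vX vN : ℝ≥0) (hvX : 0 < (vX : ℝ)) (hvN : 0 < (vN : ℝ))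
    (hX : P.map X = gaussianReal μX vX) (hN : P.map N = gaussianReal 0 vN)
    (hindep : IndepFun X N P)
    (X' : Ω → ℝ)
    (hX'def : X' = fun ω => Real.sqrt ((vX : ℝ) / ((vX : ℝ) + (vN : ℝ))) * (X ω - μX + N ω) + μX)
    (D : ℝ) (hD : D = ∫ ω, (X ω - X' ω) ^ 2 ∂P) :
    mutualInfo (P.map (fun ω => (X ω, X' ω))) =
        ENNReal.ofReal ((1 / 2) * Real.log (((vX : ℝ) + (vN : ℝ)) / (vN : ℝ))) ∧
      mutualInfo (P.map (fun ω => (X ω, X' ω))) =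
        ENNReal.ofReal (Real.log ((vX : ℝ) / Real.sqrt ((vX : ℝ) * D - D ^ 2 / 4))) := by
  set a : ℝ := √((vX : ℝ) / ((vX : ℝ) + (vN : ℝ))) with ha
  have ha2 : a ^ 2 = (vX : ℝ) / ((vX : ℝ) + (vN : ℝ)) := Real.sq_sqrt (by positivity)
  have ha0 : 0 < a := Real.sqrt_pos.2 (by positivity)
  obtain ⟨w, hw⟩ : ∃ w : ℝ≥0, (w : ℝ) = a ^ 2 * vN := ⟨⟨a ^ 2 * vN, by positivity⟩, rfl⟩
  have hwp : 0 < (w : ℝ) := by rw [hw]; positivity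
  have hX'm : Measurable X' := by rw [hX'def]; fun_prop
  have hlaw := aux_law hXm hNm hX hN hindep
  have hmom (b c : ℝ) := aux_moment (by fun_prop) (hlaw b c)
  have hratio : (vX : ℝ) / w = (vX + vN) / vN := by
    rw [hw, ha2]; field_simp
  have hX' : P.map X' = gaussianReal μX vX := by
    have h1 : HasLaw (fun ω => a * (X ω - μX) + a * N ω) _ P :=
      ⟨by fun_prop, hlaw a a⟩
    have h2 := (gaussianReal_add_const h1 μX).map_eq
    have h3 : (.mk (a ^ 2) (sq_nonneg _) * vX + .mk (a ^ 2) (sq_nonneg _) * vN : ℝ≥0) = vX := by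
      apply NNReal.coe_injective
      push_cast
      try simp only [NNReal.coe_mk]
      rw [ha2]; field_simp
    rw [h3, zero_add] at h2
    rw [← h2, hX'def]; congr 1; ext ω; ring
  have hjoint : P.map (fun ω => (X ω, X' ω)) =
      ((gaussianReal μX vX).prod (gaussianReal μX vX)).withDensity
        (fun p => ENNReal.ofReal (Real.exp (auxG μX a w vX p))) := by
    rw [hX'def]; exact aux_joint hXm hNm hX hN hindep a w hwp hvX hw
  have hfst : (P.map (fun ω => (X ω, X' ω))).map Prod.fst = gaussianReal μX vX := by
    rw [Measure.map_map measurable_fst (by fun_prop), ← hX]; rfl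
  have hsnd : (P.map (fun ω => (X ω, X' ω))).map Prod.snd = gaussianReal μX vX := by
    rw [Measure.map_map measurable_snd (by fun_prop), ← hX']; rfl
  have hGm := aux_meas μX a w vX
  have hac : P.map (fun ω => (X ω, X' ω)) ≪ (gaussianReal μX vX).prod (gaussianReal μX vX) := by
    rw [hjoint]; exact withDensity_absolutelyContinuous _ _
  have hllr : llr (P.map (fun ω => (X ω, X' ω))) ((gaussianReal μX vX).prod (gaussianReal μX vX))
      =ᵐ[P.map (fun ω => (X ω, X' ω))] auxG μX a w vX := by
    apply hac.ae_eq
    have h1 := Measure.rnDeriv_withDensity ((gaussianReal μX vX).prod (gaussianReal μX vX))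
      (f := fun p => ENNReal.ofReal (Real.exp (auxG μX a w vX p))) (by fun_prop)
    rw [← hjoint] at h1
    filter_upwards [h1] with p hp
    rw [llr, hp, ENNReal.toReal_ofReal (Real.exp_pos _).le, Real.log_exp]
  have hfun : (fun ω => auxG μX a w vX (X ω, X' ω)) = fun ω =>
      (1 / 2 * Real.log ((vX + vN) / vN) - (0 * (X ω - μX) + a * N ω) ^ 2 / (2 * w))
        + (a * (X ω - μX) + a * N ω) ^ 2 / (2 * vX) := by
    ext ω
    simp only [auxG, hX'def, hratio]
    ring
  have i1 := (hmom 0 a).1.div_const (2 * (w : ℝ))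
  have i2 := (hmom a a).1.div_const (2 * (vX : ℝ))
  have i0 : Integrable (fun _ : Ω => 1 / 2 * Real.log (((vX : ℝ) + vN) / vN)) P :=
    integrable_const _
  have hint : Integrable (fun ω => auxG μX a w vX (X ω, X' ω)) P := by
    rw [hfun]; exact (i0.sub i1).add i2
  have hval : ∫ ω, auxG μX a w vX (X ω, X' ω) ∂P = 1 / 2 * Real.log (((vX : ℝ) + vN) / vN) := by
    have i01 : Integrable (fun ω => 1 / 2 * Real.log (((vX : ℝ) + vN) / vN)
        - (0 * (X ω - μX) + a * N ω) ^ 2 / (2 * w)) P := i0.sub i1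
    rw [hfun, integral_add i01 i2, integral_sub i0 i1, integral_div, integral_div,
      (hmom 0 a).2, (hmom a a).2]
    push_cast
    simp only [NNReal.coe_mk, integral_const, probReal_univ, one_smul]
    rw [hw, ha2]; field_simp; ring
  have hpair : Measurable (fun ω => (X ω, X' ω)) := by fun_prop
  have hI : mutualInfo (P.map (fun ω => (X ω, X' ω))) =
      ENNReal.ofReal ((1 / 2) * Real.log (((vX : ℝ) + (vN : ℝ)) / (vN : ℝ))) := by
    rw [mutualInfo, hfst, hsnd, klDiv, if_pos]
    · rw [integral_congr_ae hllr, integral_map hpair.aemeasurable hGm.aestronglyMeasurable, hval]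
    · refine ⟨hac, (integrable_congr hllr).2 ?_⟩
      exact (integrable_map_measure hGm.aestronglyMeasurable hpair.aemeasurable).2 hint
  refine ⟨hI, ?_⟩
  rw [hI]
  congr 1
  have hDval : D = 2 * vX * (1 - a) := by
    have h1 : (fun ω => (X ω - X' ω) ^ 2) =
        fun ω => ((1 - a) * (X ω - μX) + (-a) * N ω) ^ 2 := by
      ext ω; simp only [hX'def]; ring
    rw [hD, h1, (hmom (1 - a) (-a)).2]
    push_cast
    try simp only [NNReal.coe_mk]
    have : a ^ 2 * ((vX : ℝ) + vN) = vX := by rw [ha2]; field_simp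
    linear_combination this
  have h6 : (vX : ℝ) * D - D ^ 2 / 4 = vX ^ 2 * (vN / (vX + vN)) := by
    have h7 : (vN : ℝ) / (vX + vN) = 1 - a ^ 2 := by rw [ha2]; field_simp; ring
    rw [h7, hDval]; ring
  have h8 : (0 : ℝ) < vN / (vX + vN) := by positivity
  rw [h6, Real.sqrt_mul (by positivity), Real.sqrt_sq hvX.le, Real.log_div hvX.ne' (by positivity),
    Real.log_mul hvX.ne' (by positivity), Real.log_sqrt h8.le, ← inv_div (vN : ℝ), Real.log_inv]
  ring
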